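/- arXiv:2208.03180 — 5 statements merged into one kernel-verified Lean document; each statement's English description precedes it below -/
import Mathlib

section
/- Eigenvalue localization for the perturbed acoustic operator (Proposition 1.5 / Lemma 5.1). Let 0 < ν < 1/2, ε ∈ (0,1) and η := ε^{1−ν}. Let L_a(q̃, H̃, v, w) := (div_h v + ∂_z w, 0, ∇_h q̃, ∂_z q̃) and L_g(q̃, H̃, v, w) := (0, −w, 0, H̃) act on smooth fields (q̃, H̃, v, w) : 𝕋³ → ℝ×ℝ×ℝ²×ℝ satisfying the symmetry (SYM), and set L_ε := L_a + ηL_g. If iω (ω ∈ ℝ) is an eigenvalue of L_ε, that is, there exists a nonzero smooth field U with L_ε U = iωU, then there exists (k_h, k_z) ∈ (2πℤ)² × 2πℤ such that |k_h|² + k_z² ≤ ω² ≤ |k_h|² + k_z² + η². Here the numbers ±(|k_h|² + k_z²)^{1/2}, (k_h,k_z) ∈ (2πℤ)³, are exactly the moduli of the eigenvalues of L_a. -/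
open Complex

noncomputable section

/-- Spatial points of `ℝ³`; fields on the torus `𝕋³` are periodic functions on `ℝ³`. -/
abbrev Sp : Type := Fin 3 → ℝ

/-- Partial derivative of a complex-valued field in the `i`-th coordinate direction. -/
def pdC (i : Fin 3) (f : Sp → ℂ) : Sp → ℂ := fun p => fderiv ℝ f p (Pi.single i 1)

/-- Periodicity (period 1 in each coordinate): the function descends to `𝕋³`. -/
def PerC (f : Sp → ℂ) : Prop := ∀ (p : Sp) (i : Fin 3), f (p + Pi.single i 1) = f p

/-- Reflection of the vertical coordinate `z ↦ −z`. -/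
def reflect (p : Sp) : Sp := Function.update p 2 (-(p 2))

open MeasureTheory in
abbrev muT : Measure (UnitAddTorus (Fin 3)) := Measure.pi (fun _ => AddCircle.haarAddCircle)

/-- projection to the torus -/
def prT (p : Sp) : UnitAddTorus (Fin 3) := fun i => ((p i : ℝ) : UnitAddCircle)

lemma prT_quot : IsOpenQuotientMap prT := by
  have : IsOpenQuotientMap (fun x : ℝ => (x : UnitAddCircle)) :=
    QuotientAddGroup.isOpenQuotientMap_mk
  exact IsOpenQuotientMap.piMap (fun _ : Fin 3 => this)

lemma perC_int {f : Sp → ℂ} (hf : PerC f) (i : Fin 3) (m : ℤ) (p : Sp) :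
    f (p + Pi.single i (m : ℝ)) = f p := by
  induction m generalizing p with
  | zero => simp
  | succ n ih =>
    have : p + Pi.single i (((n : ℤ) + 1 : ℤ) : ℝ)
        = (p + Pi.single i (((n : ℤ) : ℤ) : ℝ)) + Pi.single i 1 := by
      rw [add_assoc, ← Pi.single_add]; push_cast; rfl
    rw [this, hf, ih]
  | pred n ih =>
    have : p + Pi.single i ((-(n : ℤ) : ℤ) : ℝ)
        = (p + Pi.single i ((-(n : ℤ) - 1 : ℤ) : ℝ)) + Pi.single i 1 := by
      rw [add_assoc, ← Pi.single_add]; push_cast; simp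
    rw [← hf, ← this, ih]

lemma perC_eq {f : Sp → ℂ} (hf : PerC f) {p r : Sp} (h : prT p = prT r) : f p = f r := by
  have h' : ∀ i, ∃ m : ℤ, r i - p i = m := by
    intro i
    have := congrFun h i
    simp only [prT] at this
    obtain ⟨m, hm⟩ := AddSubgroup.mem_zmultiples_iff.1 (QuotientAddGroup.eq_iff_sub_mem.1 this)
    exact ⟨-m, by simp at hm ⊢; linarith⟩
  choose m hm using h'
  have : r = p + Pi.single 0 (m 0 : ℝ) + Pi.single 1 (m 1 : ℝ) + Pi.single 2 (m 2 : ℝ) := by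
    ext i
    have := hm i
    fin_cases i <;> simp at this ⊢ <;> linarith
  rw [this, perC_int hf, perC_int hf, perC_int hf]

/-- descend to the torus -/
def liftT (f : Sp → ℂ) : UnitAddTorus (Fin 3) → ℂ := fun y => f (Function.surjInv prT_quot.surjective y)

lemma liftT_pr {f : Sp → ℂ} (hf : PerC f) (p : Sp) : liftT f (prT p) = f p :=
  perC_eq hf (Function.surjInv_eq prT_quot.surjective _)

lemma liftT_cont {f : Sp → ℂ} (hf : PerC f) (hc : Continuous f) : Continuous (liftT f) := by
  rw [← prT_quot.continuous_comp_iff]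
  convert hc using 1
  ext p
  exact liftT_pr hf p

/-- Fourier coefficient -/
def cT (f : Sp → ℂ) (n : Fin 3 → ℤ) : ℂ := ∫ y, UnitAddTorus.mFourier (-n) y * liftT f y ∂muT

lemma cT_eq (f : Sp → ℂ) (n : Fin 3 → ℤ) : cT f n = UnitAddTorus.mFourierCoeff (liftT f) n := rfl

lemma cT_int {f : Sp → ℂ} (hf : PerC f) (hc : Continuous f) (n : Fin 3 → ℤ) :
    MeasureTheory.Integrable (fun y => UnitAddTorus.mFourier (-n) y * liftT f y) muT := by
  have : Continuous (fun y => UnitAddTorus.mFourier (-n) y * liftT f y) :=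
    (UnitAddTorus.mFourier (-n)).continuous.mul (liftT_cont hf hc)
  exact this.integrable_of_hasCompactSupport (HasCompactSupport.of_compactSpace _)

lemma cT_add {f g : Sp → ℂ} (hf : PerC f) (hfc : Continuous f) (hg : PerC g) (hgc : Continuous g)
    (n : Fin 3 → ℤ) : cT (fun p => f p + g p) n = cT f n + cT g n := by
  unfold cT
  rw [← MeasureTheory.integral_add (cT_int hf hfc n) (cT_int hg hgc n)]
  simp only [liftT, mul_add]

lemma cT_smul (a : ℂ) (f : Sp → ℂ) (n : Fin 3 → ℤ) : cT (fun p => a * f p) n = a * cT f n := by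
  unfold cT
  rw [← MeasureTheory.integral_const_mul]
  simp only [liftT]
  congr 1; ext y; ring

lemma cT_zero {f : Sp → ℂ} (hf : PerC f) (hc : Continuous f) (h : ∀ n, cT f n = 0) (p : Sp) :
    f p = 0 := by
  let F : C(UnitAddTorus (Fin 3), ℂ) := ⟨liftT f, liftT_cont hf hc⟩
  have h0 : ∀ n, UnitAddTorus.mFourierCoeff F n = 0 := h
  have hs : Summable (UnitAddTorus.mFourierCoeff F) := by
    rw [show UnitAddTorus.mFourierCoeff F = fun _ => 0 from funext h0]; exact summable_zero
  have := UnitAddTorus.hasSum_mFourier_series_apply_of_summable hs (prT p)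
  simp only [h0, zero_smul] at this
  rw [← liftT_pr hf p]
  exact this.unique hasSum_zero

lemma pdC_per {f : Sp → ℂ} (hf : PerC f) (j : Fin 3) : PerC (pdC j f) := by
  intro p i
  unfold pdC
  rw [← fderiv_comp_add_right]
  congr 2
  ext1 r
  exact hf r i

lemma pdC_cont {f : Sp → ℂ} (hf : ContDiff ℝ (⊤ : ℕ∞) f) (j : Fin 3) : Continuous (pdC j f) :=
  (hf.continuous_fderiv (by simp)).clm_apply continuous_const

lemma fourier_shift (n : Fin 3 → ℤ) (j : Fin 3) (y : UnitAddTorus (Fin 3)) (t : ℝ) :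
    UnitAddTorus.mFourier n (y + prT (Pi.single j t)) =
      UnitAddTorus.mFourier n y * Complex.exp (2 * Real.pi * I * n j * t) := by
  have key : ∀ i, fourier (n i) ((y + prT (Pi.single j t)) i)
      = fourier (n i) (y i) * (if i = j then Complex.exp (2 * Real.pi * I * n j * t) else 1) := by
    intro i
    obtain ⟨x, hx⟩ := QuotientAddGroup.mk_surjective (y i)
    have hx' : ((x : ℝ) : UnitAddCircle) = y i := hx
    simp only [Pi.add_apply, prT, ← hx', ← AddCircle.coe_add]
    rw [fourier_coe_apply, fourier_coe_apply]
    by_cases h : i = j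
    · subst h
      simp [← Complex.exp_add]; ring_nf
    · simp [h]
  simp only [UnitAddTorus.mFourier, ContinuousMap.coe_mk]
  rw [Finset.prod_congr rfl (fun i _ => key i), Finset.prod_mul_distrib]
  simp

lemma shift_coef {f : Sp → ℂ} (n : Fin 3 → ℤ) (j : Fin 3) (t : ℝ) :
    ∫ y, UnitAddTorus.mFourier (-n) y * liftT f (y + prT (Pi.single j t)) ∂muT
      = Complex.exp (2 * Real.pi * I * n j * t) * cT f n := by
  unfold cT
  rw [← MeasureTheory.integral_add_right_eq_self (fun y => UnitAddTorus.mFourier (-n) y * liftT f y)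
    (prT (Pi.single j t)), ← MeasureTheory.integral_const_mul]
  congr 1; ext y
  rw [fourier_shift]
  have : Complex.exp (2 * Real.pi * I * n j * t) * Complex.exp (2 * Real.pi * I * (-n) j * t) = 1 := by
    rw [← Complex.exp_add]; simp
  linear_combination (-UnitAddTorus.mFourier (-n) y * liftT f (y + prT (Pi.single j t))) * this

lemma cT_pd {f : Sp → ℂ} (hf : PerC f) (hs : ContDiff ℝ (⊤ : ℕ∞) f) (n : Fin 3 → ℤ) (j : Fin 3) :
    cT (pdC j f) n = 2 * Real.pi * I * n j * cT f n := by
  have hDp := pdC_per hf j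
  have hDc := pdC_cont hs j
  have c1 := liftT_cont hf hs.continuous
  have c2 := liftT_cont hDp hDc
  obtain ⟨C, hC⟩ := isCompact_univ.exists_bound_of_continuousOn c2.continuousOn
  have hm := (UnitAddTorus.mFourier (-n)).continuous
  have m1 : ∀ t : ℝ, Continuous
      (fun y => UnitAddTorus.mFourier (-n) y * liftT f (y + prT (Pi.single j t))) := fun t =>
    hm.mul (c1.comp (continuous_id.add continuous_const))
  have m2 : ∀ t : ℝ, Continuous
      (fun y => UnitAddTorus.mFourier (-n) y * liftT (pdC j f) (y + prT (Pi.single j t))) := fun t =>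
    hm.mul (c2.comp (continuous_id.add continuous_const))
  have h1 := (hasDerivAt_integral_of_dominated_loc_of_deriv_le (μ := muT) (x₀ := (0:ℝ))
    (F := fun t y => UnitAddTorus.mFourier (-n) y * liftT f (y + prT (Pi.single j t)))
    (F' := fun t y => UnitAddTorus.mFourier (-n) y * liftT (pdC j f) (y + prT (Pi.single j t)))
    (bound := fun _ => C) (s := Set.univ) Filter.univ_mem
    (Filter.Eventually.of_forall fun t => (m1 t).aestronglyMeasurable)
    ((m1 0).integrable_of_hasCompactSupport (HasCompactSupport.of_compactSpace _))
    (m2 0).aestronglyMeasurable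
    (Filter.Eventually.of_forall fun y t _ => by
      rw [norm_mul]
      have a := (UnitAddTorus.mFourier (-n)).norm_coe_le_norm y
      rw [UnitAddTorus.mFourier_norm] at a
      have b := hC (y + prT (Pi.single j t)) trivial
      nlinarith [norm_nonneg (liftT (pdC j f) (y + prT (Pi.single j t)))])
    (MeasureTheory.integrable_const _)
    (Filter.Eventually.of_forall fun y t _ => by
      apply HasDerivAt.const_mul
      obtain ⟨p, rfl⟩ := prT_quot.surjective y
      have e : ∀ t : ℝ, prT p + prT (Pi.single j t) = prT (p + t • Pi.single j 1) := by
        intro t; ext i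
        by_cases h : i = j
        · subst h; simp [prT]
        · simp [prT, h]
      simp only [e, liftT_pr hf, liftT_pr hDp]
      have hd : HasFDerivAt f (fderiv ℝ f (p + t • Pi.single j 1)) (p + t • Pi.single j 1) :=
        (hs.differentiable (by simp) _).hasFDerivAt
      have hl : HasDerivAt (fun t : ℝ => p + t • (Pi.single j 1 : Sp)) (Pi.single j 1) t := by
        simpa using ((hasDerivAt_id t).smul_const (Pi.single j 1 : Sp)).const_add p
      exact hd.comp_hasDerivAt t hl)).2
  simp only [shift_coef] at h1
  have h2 : HasDerivAt (fun t : ℝ => Complex.exp (2 * Real.pi * I * n j * t) * cT f n)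
      (2 * Real.pi * I * n j * cT f n) 0 := by
    have := ((((hasDerivAt_id (0:ℝ)).ofReal_comp).const_mul
      (2 * Real.pi * I * n j : ℂ)).cexp).mul_const (cT f n)
    simpa using this
  have h3 := h1.unique h2
  rw [← h3]
  simp

/-- Eigenvalue localization for the perturbed acoustic operator,
Proposition 1.5 / Lemma 5.1.  Let `0 < ν < 1/2`, `ε ∈ (0,1)`, `η := ε^{1−ν}`.
Let `L_a(q̃,H̃,v,w) := (div_h v + ∂_z w, 0, ∇_h q̃, ∂_z q̃)` and
`L_g(q̃,H̃,v,w) := (0, −w, 0, H̃)` act on smooth fields on `𝕋³` satisfying the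
symmetry (SYM) (`q̃, v` even in `z`; `H̃, w` odd in `z`), and set
`L_ε := L_a + ηL_g`.  If `iω` (`ω ∈ ℝ`) is an eigenvalue of `L_ε` — i.e. there
is a nonzero smooth field `U = (q̃,H̃,v,w)` with `L_ε U = iωU` — then there is
`(k_h,k_z) ∈ (2πℤ)² × 2πℤ` with `|k_h|² + k_z² ≤ ω² ≤ |k_h|² + k_z² + η²`.
(The numbers `±(|k_h|² + k_z²)^{1/2}` are exactly the moduli of the eigenvalues
of `L_a`.) -/
theorem stmt_3 (ν ε η ω : ℝ) (hν0 : 0 < ν) (hν1 : ν < 1 / 2)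
    (hε0 : 0 < ε) (hε1 : ε < 1) (hη : η = ε ^ (1 - ν))
    (q H v1 v2 w : Sp → ℂ)
    (hqs : ContDiff ℝ (⊤ : ℕ∞) q) (hHs : ContDiff ℝ (⊤ : ℕ∞) H) (hv1s : ContDiff ℝ (⊤ : ℕ∞) v1)
    (hv2s : ContDiff ℝ (⊤ : ℕ∞) v2) (hws : ContDiff ℝ (⊤ : ℕ∞) w)
    (hqp : PerC q) (hHp : PerC H) (hv1p : PerC v1) (hv2p : PerC v2) (hwp : PerC w)
    -- the symmetry (SYM)
    (hqsym : ∀ p, q (reflect p) = q p)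
    (hHsym : ∀ p, H (reflect p) = -H p)
    (hv1sym : ∀ p, v1 (reflect p) = v1 p)
    (hv2sym : ∀ p, v2 (reflect p) = v2 p)
    (hwsym : ∀ p, w (reflect p) = -w p)
    -- the eigenvalue equation L_ε U = iω U, componentwise
    (heq1 : ∀ p, pdC 0 v1 p + pdC 1 v2 p + pdC 2 w p = I * (ω : ℂ) * q p)
    (heq2 : ∀ p, -(η : ℂ) * w p = I * (ω : ℂ) * H p)
    (heq3 : ∀ p, pdC 0 q p = I * (ω : ℂ) * v1 p)
    (heq4 : ∀ p, pdC 1 q p = I * (ω : ℂ) * v2 p)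
    (heq5 : ∀ p, pdC 2 q p + (η : ℂ) * H p = I * (ω : ℂ) * w p)
    -- the field is nonzero
    (hne : ∃ p : Sp, ¬(q p = 0 ∧ H p = 0 ∧ v1 p = 0 ∧ v2 p = 0 ∧ w p = 0)) :
    ∃ m1 m2 m3 : ℤ,
      (2 * Real.pi * m1) ^ 2 + (2 * Real.pi * m2) ^ 2 + (2 * Real.pi * m3) ^ 2
          ≤ ω ^ 2 ∧
      ω ^ 2 ≤ (2 * Real.pi * m1) ^ 2 + (2 * Real.pi * m2) ^ 2
          + (2 * Real.pi * m3) ^ 2 + η ^ 2 := by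
  by_cases hsm : ω ^ 2 ≤ η ^ 2
  · refine ⟨0, 0, 0, ?_, ?_⟩
    · simp; positivity
    · simpa using hsm
  push Not at hsm
  have hω2 : 0 < ω ^ 2 := lt_of_le_of_lt (sq_nonneg η) hsm
  have hω : ω ≠ 0 := by rintro rfl; simp at hω2
  have hωC : (ω : ℂ) ≠ 0 := by exact_mod_cast hω
  have hd : ((ω : ℂ) ^ 2 - (η : ℂ) ^ 2) ≠ 0 := by
    have : ω ^ 2 - η ^ 2 ≠ 0 := by linarith
    exact_mod_cast this
  have hex : ∃ n, cT q n ≠ 0 := by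
    by_contra hcon
    push Not at hcon
    have hq0 : ∀ p, q p = 0 := cT_zero hqp hqs.continuous hcon
    have hpd : ∀ j p, pdC j q p = 0 := by
      intro j p
      have : q = fun _ => 0 := funext hq0
      simp [pdC, this]
    obtain ⟨p, hp⟩ := hne
    have hIω : I * (ω : ℂ) ≠ 0 := mul_ne_zero I_ne_zero hωC
    have e1 : v1 p = 0 := by
      have := heq3 p; rw [hpd] at this
      exact (mul_eq_zero.1 this.symm).resolve_left hIω
    have e2 : v2 p = 0 := by
      have := heq4 p; rw [hpd] at this
      exact (mul_eq_zero.1 this.symm).resolve_left hIω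
    have h2 := heq2 p
    have h5 := heq5 p
    rw [hpd] at h5
    have e3 : w p = 0 := by
      have : ((ω : ℂ) ^ 2 - (η : ℂ) ^ 2) * w p = 0 := by
        linear_combination (I * ω) * h5 + η * h2 + ((ω : ℂ) ^ 2 * w p) * I_sq
      exact (mul_eq_zero.1 this).resolve_left hd
    have e4 : H p = 0 := by
      rw [e3, mul_zero] at h2
      exact (mul_eq_zero.1 h2.symm).resolve_left hIω
    exact hp ⟨hq0 p, e4, e1, e2, e3⟩
  obtain ⟨n, hn⟩ := hex
  have f1 : cT (fun p => pdC 0 v1 p + pdC 1 v2 p + pdC 2 w p) n = cT (fun p => I * (ω : ℂ) * q p) n :=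
    congrArg (fun g => cT g n) (funext heq1)
  have f2 : cT (fun p => -(η : ℂ) * w p) n = cT (fun p => I * (ω : ℂ) * H p) n :=
    congrArg (fun g => cT g n) (funext heq2)
  have f3 : cT (pdC 0 q) n = cT (fun p => I * (ω : ℂ) * v1 p) n :=
    congrArg (fun g => cT g n) (funext heq3)
  have f4 : cT (pdC 1 q) n = cT (fun p => I * (ω : ℂ) * v2 p) n :=
    congrArg (fun g => cT g n) (funext heq4)
  have f5 : cT (fun p => pdC 2 q p + (η : ℂ) * H p) n = cT (fun p => I * (ω : ℂ) * w p) n :=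
    congrArg (fun g => cT g n) (funext heq5)
  have pH : PerC (fun p => (η : ℂ) * H p) := fun p i => by simp only [hHp p i]
  have pS : PerC (fun p => pdC 0 v1 p + pdC 1 v2 p) := fun p i => by
    simp only [pdC_per hv1p 0 p i, pdC_per hv2p 1 p i]
  rw [cT_add pS ((pdC_cont hv1s 0).add (pdC_cont hv2s 1)) (pdC_per hwp 2) (pdC_cont hws 2),
    cT_add (pdC_per hv1p 0) (pdC_cont hv1s 0) (pdC_per hv2p 1) (pdC_cont hv2s 1),
    cT_pd hv1p hv1s, cT_pd hv2p hv2s, cT_pd hwp hws, cT_smul] at f1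
  rw [cT_smul, cT_smul] at f2
  rw [cT_pd hqp hqs, cT_smul] at f3 f4
  rw [cT_add (pdC_per hqp 2) (pdC_cont hqs 2) pH (continuous_const.mul hHs.continuous),
    cT_pd hqp hqs, cT_smul, cT_smul] at f5
  generalize cT q n = Q at *
  generalize cT v1 n = V1 at *
  generalize cT v2 n = V2 at *
  generalize cT w n = W at *
  generalize cT H n = G at *
  have g5 : ((ω : ℂ) ^ 2 - (η : ℂ) ^ 2) * W = ω * (2 * Real.pi * n 2) * Q := by
    linear_combination (I * ω) * f5 + η * f2 + ((ω : ℂ) ^ 2 * W - ω * (2 * Real.pi * n 2) * Q) * I_sq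
  have g1 : ((ω : ℂ) ^ 2 - (2 * Real.pi * n 0) ^ 2 - (2 * Real.pi * n 1) ^ 2) * Q
      = ω * (2 * Real.pi * n 2) * W := by
    have g3 : (2 * Real.pi * n 0) * Q = ω * V1 := mul_left_cancel₀ I_ne_zero (by linear_combination f3)
    have g4 : (2 * Real.pi * n 1) * Q = ω * V2 := mul_left_cancel₀ I_ne_zero (by linear_combination f4)
    have g0 : (2 * Real.pi * n 0) * V1 + (2 * Real.pi * n 1) * V2 + (2 * Real.pi * n 2) * W = ω * Q :=
      mul_left_cancel₀ I_ne_zero (by linear_combination f1)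
    linear_combination (-(2 * Real.pi * n 0) : ℂ) * g3 + (-(2 * Real.pi * n 1) : ℂ) * g4 - (ω : ℂ) * g0
  have gC : ((ω : ℂ) ^ 2 - (η : ℂ) ^ 2) *
      ((ω : ℂ) ^ 2 - (2 * Real.pi * n 0) ^ 2 - (2 * Real.pi * n 1) ^ 2)
      = (ω : ℂ) ^ 2 * (2 * Real.pi * n 2) ^ 2 := by
    apply mul_right_cancel₀ hn
    linear_combination ((ω : ℂ) ^ 2 - (η : ℂ) ^ 2) * g1 + (ω : ℂ) * (2 * Real.pi * n 2) * g5
  have gR : (ω ^ 2 - η ^ 2) * (ω ^ 2 - (2 * Real.pi * n 0) ^ 2 - (2 * Real.pi * n 1) ^ 2)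
      = ω ^ 2 * (2 * Real.pi * n 2) ^ 2 := by exact_mod_cast gC
  refine ⟨n 0, n 1, n 2, ?_, ?_⟩
  all_goals
    have a0 := sq_nonneg (2 * Real.pi * n 0)
    have a1 := sq_nonneg (2 * Real.pi * n 1)
    have a2 := sq_nonneg (2 * Real.pi * n 2)
    have a3 := sq_nonneg η
    generalize (2 * Real.pi * n 0) ^ 2 = A at *
    generalize (2 * Real.pi * n 1) ^ 2 = B at *
    generalize (2 * Real.pi * n 2) ^ 2 = C at *
    generalize ω ^ 2 = x at *
    generalize η ^ 2 = y at *
  · have hz : 0 ≤ x - A - B := by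
      by_contra hlt
      push Not at hlt
      nlinarith [mul_pos (sub_pos.2 hsm) (neg_pos.2 hlt), mul_nonneg hω2.le a2]
    have : x * C ≤ x * (x - A - B) := by nlinarith
    have := le_of_mul_le_mul_left this hω2
    linarith
  · by_contra hlt
    push Not at hlt
    have hz : 0 ≤ x - A - B := by linarith
    nlinarith [mul_pos hω2 (by linarith : 0 < x - y - A - B - C), mul_nonneg a3 (add_nonneg a0 a1)]
end
end

section
/- Algebraic eigenvalue localization (core of Lemma 5.1, identities (5.12)–(5.14)). Let η > 0 and let A, B ∈ ℝ satisfy A ≥ B ≥ 0. If ω ∈ ℝ satisfies ω²(ω² − η²) − Aω² + η²B = 0, then either ω² ≤ η², or A ≤ ω² ≤ A + η². -/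
/-- Algebraic eigenvalue localization, core of Lemma 5.1,
identities (5.12)–(5.14).
Let `η > 0` and `A, B ∈ ℝ` with `A ≥ B ≥ 0`.  If `ω ∈ ℝ` satisfies
`ω²(ω² − η²) − Aω² + η²B = 0`, then either `ω² ≤ η²`, or `A ≤ ω² ≤ A + η²`. -/
theorem stmt_4 (η A B ω : ℝ) (hη : 0 < η) (hBA : B ≤ A) (hB : 0 ≤ B)
    (hroot : ω ^ 2 * (ω ^ 2 - η ^ 2) - A * ω ^ 2 + η ^ 2 * B = 0) :
    ω ^ 2 ≤ η ^ 2 ∨ (A ≤ ω ^ 2 ∧ ω ^ 2 ≤ A + η ^ 2) := by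
  have he : 0 < η ^ 2 := by positivity
  rcases le_or_gt (ω ^ 2) (η ^ 2) with h | h
  · exact Or.inl h
  · right
    have hx : 0 < ω ^ 2 := he.trans h
    have h1 : 0 ≤ (ω ^ 2 - η ^ 2) * (ω ^ 2 - A) := by
      have h2 : (ω ^ 2 - η ^ 2) * (ω ^ 2 - A) = η ^ 2 * (A - B) := by linear_combination hroot
      rw [h2]
      exact mul_nonneg he.le (sub_nonneg.2 hBA)
    have h3 : 0 ≤ ω ^ 2 * (A + η ^ 2 - ω ^ 2) := by
      have h4 : ω ^ 2 * (A + η ^ 2 - ω ^ 2) = η ^ 2 * B := by linear_combination -hroot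
      rw [h4]
      exact mul_nonneg he.le hB
    have h5 := nonneg_of_mul_nonneg_right h1 (sub_pos.2 h)
    have h6 := nonneg_of_mul_nonneg_right h3 hx
    constructor <;> linarith
end

section
/- Internal-wave frequency comparison (estimate (5.44) of Corollary 5.4). Let 0 < η ≤ 1, k_h ∈ 2πℤ² ∖ {0}, k_z ∈ 2πℤ ∖ {0}. Then 0 < ω^gw_sp(η, k_h, k_z) − ω^gw(η, k_h, k_z) ≤ η³; that is, the soundproof internal-wave frequency strictly exceeds the compressible (perturbed) internal-wave frequency, and the difference is O(η³) uniformly in (k_h, k_z). -/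
/-- The perturbed (compressible) internal-wave frequency
`ω^gw(η,k_h,k_z) = (2η²a/(S + √A))^{1/2}`, `a = |k_h|²`, `b = k_z²`,
`S = a + b + η²`, `A = S² − 4η²a`. -/
noncomputable def omegaGW (η a b : ℝ) : ℝ :=
  Real.sqrt (2 * η ^ 2 * a /
    ((a + b + η ^ 2) + Real.sqrt ((a + b + η ^ 2) ^ 2 - 4 * η ^ 2 * a)))

/-- The soundproof internal-wave frequency `ω^gw_sp(η,k_h,k_z) = η|k_h|/(a+b)^{1/2}`. -/
noncomputable def omegaGWsp (η a b : ℝ) : ℝ :=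
  η * Real.sqrt a / Real.sqrt (a + b)

theorem aux_cmp (η a b : ℝ) (hη0 : 0 < η) (ha : 0 < a) (hb : 1 ≤ b) :
    0 < omegaGWsp η a b - omegaGW η a b ∧
    omegaGWsp η a b - omegaGW η a b ≤ η ^ 3 := by
  have hT : 0 < a + b := by linarith
  have hη2 : 0 < η ^ 2 := by positivity
  have hsp : omegaGWsp η a b = Real.sqrt (η ^ 2 * a / (a + b)) := by
    unfold omegaGWsp
    rw [Real.sqrt_div (by positivity), Real.sqrt_mul (by positivity), Real.sqrt_sq hη0.le]
  have hr0 := Real.sqrt_nonneg ((a + b + η ^ 2) ^ 2 - 4 * η ^ 2 * a)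
  have hrS : Real.sqrt ((a + b + η ^ 2) ^ 2 - 4 * η ^ 2 * a) ≤ a + b + η ^ 2 := by
    rw [Real.sqrt_le_iff]
    constructor
    · positivity
    · nlinarith [mul_pos hη2 ha]
  have hrT : a + b - η ^ 2 < Real.sqrt ((a + b + η ^ 2) ^ 2 - 4 * η ^ 2 * a) := by
    apply Real.lt_sqrt_of_sq_lt
    nlinarith [mul_pos hη2 (show 0 < b by linarith)]
  have hlow : Real.sqrt (η ^ 2 * a / (a + b)) * ((a + b) / (a + b + η ^ 2)) ≤ omegaGW η a b := by
    unfold omegaGW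
    apply Real.le_sqrt_of_sq_le
    rw [mul_pow, Real.sq_sqrt (by positivity)]
    calc η ^ 2 * a / (a + b) * ((a + b) / (a + b + η ^ 2)) ^ 2
        = η ^ 2 * a / (a + b + η ^ 2) * ((a + b) / (a + b + η ^ 2)) := by field_simp
      _ ≤ η ^ 2 * a / (a + b + η ^ 2) * 1 := by
          gcongr
          rw [div_le_one (by positivity)]
          linarith
      _ = 2 * η ^ 2 * a / ((a + b + η ^ 2) + (a + b + η ^ 2)) := by field_simp; ring
      _ ≤ _ := by gcongr
  have hle : Real.sqrt (η ^ 2 * a / (a + b)) ≤ η := by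
    rw [Real.sqrt_le_iff]
    refine ⟨hη0.le, ?_⟩
    rw [div_le_iff₀ hT]
    nlinarith
  rw [hsp]
  constructor
  · rw [sub_pos]
    unfold omegaGW
    apply Real.sqrt_lt_sqrt (by positivity)
    rw [div_lt_div_iff₀ (by positivity) hT]
    nlinarith [mul_pos hη2 ha]
  · have h1 : (a + b) / (a + b + η ^ 2) = 1 - η ^ 2 / (a + b + η ^ 2) := by field_simp; ring
    have h2 : η ^ 2 / (a + b + η ^ 2) ≤ η ^ 2 := div_le_self hη2.le (by linarith)
    have h3 : Real.sqrt (η ^ 2 * a / (a + b)) * (η ^ 2 / (a + b + η ^ 2)) ≤ η * η ^ 2 := by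
      gcongr
    rw [h1] at hlow
    nlinarith

theorem aux_int (k : ℤ) (hk : k ≠ 0) : 1 ≤ (2 * Real.pi * (k : ℝ)) ^ 2 := by
  have h : (1 : ℝ) ≤ (k : ℝ) ^ 2 := by
    have : 0 < k ^ 2 := by positivity
    exact_mod_cast this
  have hp := Real.pi_gt_three
  rw [mul_pow]
  nlinarith

/-- Internal-wave frequency comparison, estimate (5.44) of
Corollary 5.4.  Let `0 < η ≤ 1`, `k_h ∈ 2πℤ² ∖ {0}`, `k_z ∈ 2πℤ ∖ {0}`.
Then `0 < ω^gw_sp(η,k_h,k_z) − ω^gw(η,k_h,k_z) ≤ η³`: the soundproof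
internal-wave frequency strictly exceeds the compressible (perturbed) one,
and the difference is `O(η³)` uniformly in `(k_h,k_z)`. -/
theorem stmt_10 (η : ℝ) (hη0 : 0 < η) (hη1 : η ≤ 1)
    (m : Fin 2 → ℤ) (hm : m ≠ 0) (n : ℤ) (hn : n ≠ 0) :
    let a : ℝ := (2 * Real.pi * (m 0 : ℝ)) ^ 2 + (2 * Real.pi * (m 1 : ℝ)) ^ 2
    let b : ℝ := (2 * Real.pi * (n : ℝ)) ^ 2
    0 < omegaGWsp η a b - omegaGW η a b ∧
    omegaGWsp η a b - omegaGW η a b ≤ η ^ 3 := by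
  intro a b
  apply aux_cmp η a b hη0 _ (aux_int n hn)
  by_cases h0 : m 0 = 0
  · have h1 : m 1 ≠ 0 := by
      intro h1
      apply hm
      ext i
      fin_cases i
      · exact h0
      · exact h1
    have := aux_int _ h1
    have := sq_nonneg (2 * Real.pi * (m 0 : ℝ))
    simp only [a]
    linarith
  · have := aux_int _ h0
    have := sq_nonneg (2 * Real.pi * (m 1 : ℝ))
    simp only [a]
    linarith
end

section
/- Acoustic frequency comparison (estimate (5.46) of Corollary 5.4). Let 0 < η ≤ 1, k_h ∈ 2πℤ², k_z ∈ 2πℤ with (k_h, k_z) ≠ (0, 0). If k_z ≠ 0, then (ω^aw_a(k_h,k_z))² < (ω^aw(η,k_h,k_z))² ≤ (ω^aw_a(k_h,k_z))² + η², and consequently 0 < ω^aw(η,k_h,k_z) − ω^aw_a(k_h,k_z) ≤ η²/(4π). If k_z = 0, then ω^aw(η,k_h,0) = ω^aw_a(k_h,0). -/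
/-- The perturbed acoustic frequency
`ω^aw(η,k_h,k_z) = ((S + √A)/2)^{1/2}`, with `a = |k_h|²`, `b = k_z²`,
`S = a + b + η²`, `A = S² − 4η²a`. -/
noncomputable def omegaAW (η a b : ℝ) : ℝ :=
  Real.sqrt (((a + b + η ^ 2) + Real.sqrt ((a + b + η ^ 2) ^ 2 - 4 * η ^ 2 * a)) / 2)

/-- The pure acoustic frequency `ω^aw_a(k_h,k_z) = (a + b)^{1/2}`. -/
noncomputable def omegaAWa (a b : ℝ) : ℝ := Real.sqrt (a + b)

/-- Acoustic frequency comparison, estimate (5.46) of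
Corollary 5.4.  Let `0 < η ≤ 1`, `k_h ∈ 2πℤ²`, `k_z ∈ 2πℤ`,
`(k_h,k_z) ≠ (0,0)`.  If `k_z ≠ 0` then
`(ω^aw_a)² < (ω^aw)² ≤ (ω^aw_a)² + η²`, and consequently
`0 < ω^aw − ω^aw_a ≤ η²/(4π)`.  If `k_z = 0` then `ω^aw = ω^aw_a`. -/
theorem stmt_11 (η : ℝ) (hη0 : 0 < η) (hη1 : η ≤ 1)
    (m : Fin 2 → ℤ) (n : ℤ) (hmn : ¬(m = 0 ∧ n = 0)) :
    let a : ℝ := (2 * Real.pi * (m 0 : ℝ)) ^ 2 + (2 * Real.pi * (m 1 : ℝ)) ^ 2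
    let b : ℝ := (2 * Real.pi * (n : ℝ)) ^ 2
    (n ≠ 0 →
      (omegaAWa a b ^ 2 < omegaAW η a b ^ 2 ∧
        omegaAW η a b ^ 2 ≤ omegaAWa a b ^ 2 + η ^ 2) ∧
      (0 < omegaAW η a b - omegaAWa a b ∧
        omegaAW η a b - omegaAWa a b ≤ η ^ 2 / (4 * Real.pi))) ∧
    (n = 0 → omegaAW η a b = omegaAWa a b) := by
  intro a b
  have hpi := Real.pi_gt_three
  have ha : 0 ≤ a := by positivity
  have hb : 0 ≤ b := by positivity
  have hη2 : 0 < η ^ 2 := by positivity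
  have hη2' : η ^ 2 ≤ 1 := by nlinarith
  have key : ∀ z : ℤ, z ≠ 0 → (2 * Real.pi) ^ 2 ≤ (2 * Real.pi * (z : ℝ)) ^ 2 := by
    intro z hz
    have h1 : (1 : ℤ) ≤ z ^ 2 := by
      have : 0 < z ^ 2 := by positivity
      omega
    have h2 : (1 : ℝ) ≤ (z : ℝ) ^ 2 := by exact_mod_cast h1
    rw [mul_pow (2 * Real.pi) (z : ℝ)]
    exact le_mul_of_one_le_right (by positivity) h2
  refine ⟨fun hn => ?_, fun hn => ?_⟩
  · have hb1 : (2 * Real.pi) ^ 2 ≤ b := key n hn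
    have hb0 : 0 < b := lt_of_lt_of_le (by positivity) hb1
    have hlow : a + b - η ^ 2 < Real.sqrt ((a + b + η ^ 2) ^ 2 - 4 * η ^ 2 * a) := by
      apply Real.lt_sqrt_of_sq_lt
      nlinarith [mul_pos hη2 hb0]
    have hup : Real.sqrt ((a + b + η ^ 2) ^ 2 - 4 * η ^ 2 * a) ≤ a + b + η ^ 2 := by
      apply Real.sqrt_le_iff.mpr
      refine ⟨by positivity, ?_⟩
      nlinarith [mul_nonneg hη2.le ha]
    have e1 : omegaAWa a b ^ 2 = a + b := Real.sq_sqrt (by positivity)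
    have e2 : omegaAW η a b ^ 2 =
        ((a + b + η ^ 2) + Real.sqrt ((a + b + η ^ 2) ^ 2 - 4 * η ^ 2 * a)) / 2 :=
      Real.sq_sqrt (by positivity)
    have p1 : 0 ≤ omegaAWa a b := Real.sqrt_nonneg _
    have p2 : 0 ≤ omegaAW η a b := Real.sqrt_nonneg _
    have l1 : omegaAWa a b ^ 2 < omegaAW η a b ^ 2 := by rw [e1, e2]; linarith
    have l2 : omegaAW η a b ^ 2 ≤ omegaAWa a b ^ 2 + η ^ 2 := by rw [e1, e2]; linarith
    have l3 : omegaAWa a b < omegaAW η a b := lt_of_pow_lt_pow_left₀ 2 p2 l1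
    have l4 : 2 * Real.pi ≤ omegaAWa a b := Real.le_sqrt_of_sq_le (by linarith)
    refine ⟨⟨l1, l2⟩, by linarith, ?_⟩
    rw [le_div_iff₀ (by positivity)]
    have : (omegaAW η a b - omegaAWa a b) * (4 * Real.pi) ≤
        (omegaAW η a b - omegaAWa a b) * (omegaAW η a b + omegaAWa a b) :=
      mul_le_mul_of_nonneg_left (by linarith) (by linarith)
    nlinarith
  · have hb0 : b = 0 := by simp [b, hn]
    have ha1 : 1 ≤ a := by
      have h4 : 1 ≤ (2 * Real.pi) ^ 2 := by nlinarith
      by_cases h0 : m 0 = 0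
      · have h1 : m 1 ≠ 0 := by
          intro h1
          apply hmn
          refine ⟨?_, hn⟩
          funext i
          fin_cases i
          · exact h0
          · exact h1
        have := key _ h1
        have := sq_nonneg (2 * Real.pi * (m 0 : ℝ))
        linarith
      · have := key _ h0
        have := sq_nonneg (2 * Real.pi * (m 1 : ℝ))
        linarith
    have e : (a + b + η ^ 2) ^ 2 - 4 * η ^ 2 * a = (a - η ^ 2) ^ 2 := by rw [hb0]; ring
    unfold omegaAW omegaAWa
    rw [e, Real.sqrt_sq (by linarith), hb0]
    congr 1
    ring
end

section
/- Three-scale classification of eigenfrequencies (Proposition 1.5, second part). Let η > 0, k_h ∈ ℝ² ∖ {0}, k_z ∈ ℝ with η² ≤ |k_h|² + k_z². Then the internal-wave frequency satisfies η|k_h|/(2(|k_h|² + k_z²))^{1/2} ≤ ω^gw(η,k_h,k_z) ≤ η, and the perturbed acoustic frequency satisfies (|k_h|² + k_z²)^{1/2} ≤ ω^aw(η,k_h,k_z) ≤ (|k_h|² + k_z² + η²)^{1/2}. Consequently, with η = ε^{1−ν}, the eigenfrequencies of the operator ε^{−1}L_ε = ε^{−1}L_a + ε^{−ν}L_g fall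 into three families: the mean-flow frequency 0, internal-wave frequencies of size O(ε^{−ν}), and perturbed acoustic frequencies of size O(ε^{−1}). -/
/-- Three-scale classification of eigenfrequencies,
Proposition 1.5, second part — quantitative content.
Let `η > 0`, `k_h ∈ ℝ² ∖ {0}`, `k_z ∈ ℝ` with `η² ≤ |k_h|² + k_z²`.  Then the
internal-wave frequency satisfies
`η|k_h|/(2(|k_h|² + k_z²))^{1/2} ≤ ω^gw(η,k_h,k_z) ≤ η`,
and the perturbed acoustic frequency satisfies
`(|k_h|² + k_z²)^{1/2} ≤ ω^aw(η,k_h,k_z) ≤ (|k_h|² + k_z² + η²)^{1/2}`.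
(Consequently, with `η = ε^{1−ν}`, the eigenfrequencies of
`ε^{−1}L_ε = ε^{−1}L_a + ε^{−ν}L_g` fall into the three families: mean flow `0`,
internal waves of size `O(ε^{−ν})`, and perturbed acoustic waves of size
`O(ε^{−1})`.) -/
theorem stmt_12 (η : ℝ) (hη : 0 < η) (kh : Fin 2 → ℝ) (hkh : kh ≠ 0) (kz : ℝ)
    (hsmall : η ^ 2 ≤ kh 0 ^ 2 + kh 1 ^ 2 + kz ^ 2) :
    let a : ℝ := kh 0 ^ 2 + kh 1 ^ 2
    let b : ℝ := kz ^ 2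
    (η * Real.sqrt a / Real.sqrt (2 * (a + b)) ≤ omegaGW η a b ∧
      omegaGW η a b ≤ η) ∧
    (Real.sqrt (a + b) ≤ omegaAW η a b ∧
      omegaAW η a b ≤ Real.sqrt (a + b + η ^ 2)) := by
  intro a b
  have ha : 0 < a := by
    rcases eq_or_ne (kh 0) 0 with h0 | h0
    · have h1 : kh 1 ≠ 0 := by
        intro h1
        apply hkh
        ext i
        fin_cases i
        · exact h0
        · exact h1
      have : 0 < kh 1 ^ 2 := by positivity
      have : 0 ≤ kh 0 ^ 2 := by positivity
      change 0 < kh 0 ^ 2 + kh 1 ^ 2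
      linarith
    · have : 0 < kh 0 ^ 2 := by positivity
      have : 0 ≤ kh 1 ^ 2 := by positivity
      change 0 < kh 0 ^ 2 + kh 1 ^ 2
      linarith
  have hb : 0 ≤ b := sq_nonneg kz
  have hs : η ^ 2 ≤ a + b := hsmall
  clear_value a b
  have hη2 : 0 < η ^ 2 := by positivity
  unfold omegaGW omegaAW
  have hT1 : a + b - η ^ 2 ≤ Real.sqrt ((a + b + η ^ 2) ^ 2 - 4 * η ^ 2 * a) := by
    apply Real.le_sqrt_of_sq_le
    nlinarith [mul_nonneg hη2.le hb]
  have hT2 : Real.sqrt ((a + b + η ^ 2) ^ 2 - 4 * η ^ 2 * a) ≤ a + b + η ^ 2 := by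
    apply Real.sqrt_le_iff.mpr
    constructor
    · positivity
    · nlinarith [mul_pos hη2 ha]
  generalize Real.sqrt ((a + b + η ^ 2) ^ 2 - 4 * η ^ 2 * a) = T at hT1 hT2 ⊢
  have hST : 0 < a + b + η ^ 2 + T := by linarith
  have hab : 0 < 2 * (a + b) := by linarith
  have hp : 0 < η ^ 2 * a := by positivity
  refine ⟨⟨?_, ?_⟩, ?_, ?_⟩
  · apply Real.le_sqrt_of_sq_le
    rw [div_pow, mul_pow, Real.sq_sqrt ha.le, Real.sq_sqrt hab.le,
      div_le_div_iff₀ hab hST]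
    nlinarith
  · apply Real.sqrt_le_iff.mpr
    refine ⟨hη.le, ?_⟩
    rw [div_le_iff₀ hST]
    nlinarith
  · apply Real.sqrt_le_sqrt
    linarith
  · apply Real.sqrt_le_sqrt
    linarith
end
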